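/- The operators satisfy the q-commutation relations of the momentum subalgebra: P₋₁ P₀ = q P₀ P₋₁ and P₀ P₁ = q P₁ P₀ as linear operators on V. -/

import Mathlib

/-!
`P₀` is diagonal on the canonical basis, with an eigenvalue depending only on `π₀ + π₁` and
proportional to `q ^ (π₀ + π₁)`. Since `P₁` raises `π₀ + π₁` by one and `P₋₁` lowers it by one
(or kills the vector), they multiply the `P₀`-eigenvalue of each basis vector by `q` and `q⁻¹`,
which is the content of the two relations.
-/

/- The irreducible Hilbert-space representation of highest weight `w` of the q-Euclidean
algebra `U_q(e³)` (Theorem 3 of the paper): `S` is the index set of the q-lattice,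
`V` the space of finitely supported functions `S → ℂ` with canonical basis `e`,
and `P0, P1, Pm1, Lam, LamInv, K, Lp, Lm` realize the generators
`p⁰, p¹, p⁻¹, Λ, Λ⁻¹, k¹, L^{01}, L^{−1,0}`. -/

noncomputable section

/-- The q-lattice index set `S = {(π₀,π₁,j) ∈ ℤ³ : π₀ ≥ 0, j ≤ π₀}`. -/
structure SIdx : Type where
  π0 : ℤ
  π1 : ℤ
  j : ℤ
  hπ0 : 0 ≤ π0
  hj : j ≤ π0

instance : DecidableEq SIdx := fun _ _ => Classical.dec _

/-- `V`: finitely supported functions `S → ℂ`. -/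
abbrev V : Type := SIdx →₀ ℂ

/-- The canonical basis vector `e_{π₀,π₁,j}`. -/
def e (s : SIdx) : V := Finsupp.single s 1

/-- The linear operator on `V` determined by its values on the canonical basis. -/
def opOf (g : SIdx → V) : V →ₗ[ℂ] V :=
  Finsupp.lsum ℂ fun s => LinearMap.toSpanSingleton ℂ V (g s)

/-- `P₀ e_{π₀,π₁,j} = ε M (1+q⁻¹)^(1/2) q^(2+π₀+π₁) e_{π₀,π₁,j}`. -/
def P0 (q M ε : ℝ) : V →ₗ[ℂ] V :=
  opOf fun s => ((ε * M * Real.sqrt (1 + q⁻¹) * q ^ (2 + s.π0 + s.π1) : ℝ) : ℂ) • e s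

/-- `P₁ e_{π₀,π₁,j} = M (1−q^(2π₀+2))^(1/2) q^(1+π₁) e_{π₀+1,π₁,j+1}`. -/
def P1 (q M : ℝ) : V →ₗ[ℂ] V :=
  opOf fun s => ((M * Real.sqrt (1 - q ^ (2 * s.π0 + 2)) * q ^ (1 + s.π1) : ℝ) : ℂ) •
    e ⟨s.π0 + 1, s.π1, s.j + 1, by have h0 := s.hπ0; have h1 := s.hj; omega, by have h0 := s.hπ0; have h1 := s.hj; omega⟩

/-- `P₋₁ e_{π₀,π₁,j} = M (1−q^(2π₀))^(1/2) q^(1/2+π₁) e_{π₀−1,π₁,j−1}` (zero if `π₀ = 0`). -/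
def Pm1 (q M : ℝ) : V →ₗ[ℂ] V :=
  opOf fun s =>
    if h : 0 < s.π0 then
      ((M * Real.sqrt (1 - q ^ (2 * s.π0)) * q ^ ((1 : ℝ) / 2 + (s.π1 : ℝ)) : ℝ) : ℂ) •
        e ⟨s.π0 - 1, s.π1, s.j - 1, by have h0 := s.hπ0; have h1 := s.hj; omega, by have h0 := s.hπ0; have h1 := s.hj; omega⟩
    else 0

/-- `Λ e_{π₀,π₁,j} = e_{π₀,π₁+1,j}`. -/
def Lam : V →ₗ[ℂ] V := opOf fun s => e ⟨s.π0, s.π1 + 1, s.j, s.hπ0, s.hj⟩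

/-- `Λ⁻¹ e_{π₀,π₁,j} = e_{π₀,π₁−1,j}`. -/
def LamInv : V →ₗ[ℂ] V := opOf fun s => e ⟨s.π0, s.π1 - 1, s.j, s.hπ0, s.hj⟩

/-- `K e_{π₀,π₁,j} = q^(2j+w) e_{π₀,π₁,j}`. -/
def K (q w : ℝ) : V →ₗ[ℂ] V :=
  opOf fun s => ((q ^ (2 * (s.j : ℝ) + w) : ℝ) : ℂ) • e s

/-- `L⁺ e_{π₀,π₁,j} = q^(−3/2−π₀) [(1+q^(π₀−j−w))(1−q^(π₀−j))/((q⁻¹−1)(1−q))]^(1/2)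
    e_{π₀,π₁,j+1}` (zero if `j = π₀`). -/
def Lp (q w : ℝ) : V →ₗ[ℂ] V :=
  opOf fun s =>
    if h : s.j < s.π0 then
      ((q ^ (-(3 : ℝ) / 2 - (s.π0 : ℝ)) *
          Real.sqrt ((1 + q ^ ((s.π0 : ℝ) - (s.j : ℝ) - w)) *
            (1 - q ^ ((s.π0 : ℝ) - (s.j : ℝ))) / ((q⁻¹ - 1) * (1 - q))) : ℝ) : ℂ) •
        e ⟨s.π0, s.π1, s.j + 1, s.hπ0, by have h0 := s.hπ0; have h1 := s.hj; omega⟩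
    else 0

/-- `L⁻ e_{π₀,π₁,j} = q^(−π₀) [(1+q^(π₀−j+1−w))(1−q^(π₀−j+1))/((q⁻¹−1)(1−q))]^(1/2)
    e_{π₀,π₁,j−1}`. -/
def Lm (q w : ℝ) : V →ₗ[ℂ] V :=
  opOf fun s =>
    ((q ^ (-(s.π0 : ℝ)) *
        Real.sqrt ((1 + q ^ ((s.π0 : ℝ) - (s.j : ℝ) + 1 - w)) *
          (1 - q ^ ((s.π0 : ℝ) - (s.j : ℝ) + 1)) / ((q⁻¹ - 1) * (1 - q))) : ℝ) : ℂ) •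
      e ⟨s.π0, s.π1, s.j - 1, s.hπ0, by have h0 := s.hπ0; have h1 := s.hj; omega⟩

theorem comp_eq_smul_comp_of_span_eigenvectors {ι R N : Type*} [CommSemiring R]
    [AddCommMonoid N] [Module R N] {v : ι → N} (hv : Submodule.span R (Set.range v) = ⊤)
    {D T : N →ₗ[R] N} {a : ι → R} {c : R} (hD : ∀ i, D (v i) = a i • v i)
    (hDT : ∀ i, D (T (v i)) = (c * a i) • T (v i)) :
    D ∘ₗ T = c • (T ∘ₗ D) :=
  LinearMap.ext_on_range hv fun i => by
    simp only [LinearMap.comp_apply, LinearMap.smul_apply, hD, hDT, map_smul, mul_smul]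

theorem span_range_e : Submodule.span ℂ (Set.range e) = ⊤ := by
  have he : ⇑(Finsupp.basisSingleOne : Module.Basis SIdx ℂ V) = e := Finsupp.coe_basisSingleOne
  rw [← he, Module.Basis.span_eq]

theorem opOf_e (g : SIdx → V) (s : SIdx) : opOf g (e s) = g s := by
  simp [opOf, e]

/-- The eigenvalue of `P₀` on the basis vectors `e_{π₀,π₁,j}` with `π₀ + π₁ = n`. -/
def p0Eigenvalue (q M ε : ℝ) (n : ℤ) : ℝ :=
  ε * M * Real.sqrt (1 + q⁻¹) * q ^ (2 + n)

theorem p0Eigenvalue_add_one {q : ℝ} (hq : q ≠ 0) (M ε : ℝ) (n : ℤ) :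
    p0Eigenvalue q M ε (n + 1) = q * p0Eigenvalue q M ε n := by
  simp only [p0Eigenvalue, ← add_assoc, zpow_add_one₀ hq]
  ring

theorem p0Eigenvalue_sub_one {q : ℝ} (hq : q ≠ 0) (M ε : ℝ) (n : ℤ) :
    p0Eigenvalue q M ε (n - 1) = q⁻¹ * p0Eigenvalue q M ε n := by
  rw [eq_inv_mul_iff_mul_eq₀ hq, ← p0Eigenvalue_add_one hq, sub_add_cancel]

theorem P0_e (q M ε : ℝ) (s : SIdx) :
    P0 q M ε (e s) = (p0Eigenvalue q M ε (s.π0 + s.π1) : ℂ) • e s := by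
  rw [P0, opOf_e, p0Eigenvalue, add_assoc]

theorem P0_P1_e (q M ε : ℝ) (s : SIdx) :
    P0 q M ε (P1 q M (e s)) =
      (p0Eigenvalue q M ε (s.π0 + s.π1 + 1) : ℂ) • P1 q M (e s) := by
  rw [P1, opOf_e, map_smul, P0_e, smul_comm, add_right_comm]

theorem P0_Pm1_e (q M ε : ℝ) (s : SIdx) :
    P0 q M ε (Pm1 q M (e s)) =
      (p0Eigenvalue q M ε (s.π0 + s.π1 - 1) : ℂ) • Pm1 q M (e s) := by
  rw [Pm1, opOf_e]
  split_ifs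
  · rw [map_smul, P0_e, smul_comm, sub_add_eq_add_sub]
  · rw [map_zero, smul_zero]

theorem P0_comp_P1 {q : ℝ} (hq : q ≠ 0) (M ε : ℝ) :
    P0 q M ε ∘ₗ P1 q M = (q : ℂ) • (P1 q M ∘ₗ P0 q M ε) :=
  comp_eq_smul_comp_of_span_eigenvectors span_range_e (P0_e q M ε) fun s => by
    rw [P0_P1_e, p0Eigenvalue_add_one hq, Complex.ofReal_mul]

theorem P0_comp_Pm1 {q : ℝ} (hq : q ≠ 0) (M ε : ℝ) :
    P0 q M ε ∘ₗ Pm1 q M = (q : ℂ)⁻¹ • (Pm1 q M ∘ₗ P0 q M ε) :=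
  comp_eq_smul_comp_of_span_eigenvectors span_range_e (P0_e q M ε) fun s => by
    rw [P0_Pm1_e, p0Eigenvalue_sub_one hq, Complex.ofReal_mul, Complex.ofReal_inv]

/-- The momentum operators satisfy the q-commutation relations
`P₋₁ P₀ = q P₀ P₋₁` and `P₀ P₁ = q P₁ P₀`. -/
theorem momentum_q_commutation
    (q M ε w : ℝ) (hq0 : 0 < q) (hq1 : q < 1) (hM : 0 < M)
    (hε : ε = 1 ∨ ε = -1) (hw : 0 ≤ w) :
    Pm1 q M ∘ₗ P0 q M ε = (q : ℂ) • (P0 q M ε ∘ₗ Pm1 q M) ∧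
    P0 q M ε ∘ₗ P1 q M = (q : ℂ) • (P1 q M ∘ₗ P0 q M ε) := by
  have hq : q ≠ 0 := hq0.ne'
  have hqC : (q : ℂ) ≠ 0 := Complex.ofReal_ne_zero.mpr hq
  refine ⟨?_, P0_comp_P1 hq M ε⟩
  rw [P0_comp_Pm1 hq, smul_inv_smul₀ hqC]
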